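/- Let I ⊆ ℝ[x,y] be an ideal such that the semiring Σ_h + I is archimedean, and let p_1, …, p_r ∈ ℝ[x,y]. Then the hermitian module M = I + Σ_h + p_1·Σ_h + ⋯ + p_r·Σ_h has the Quillen property (Q): M contains every f ∈ ℝ[x,y] that is strictly positive on X_M = V_ℝ(I) ∩ {a ∈ ℂⁿ : p_1(a) ≥ 0, …, p_r(a) ≥ 0}. -/

import Mathlib

open MvPolynomial Complex Matrix MeasureTheory ComplexOrder

noncomputable section

universe u

/-- `ℂ[z,z̄]`: the polynomial ring in the `2n` variables `z_j` (encoded `Sum.inl j`)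
and `z̄_j` (encoded `Sum.inr j`). -/
abbrev CPoly (n : ℕ) := MvPolynomial (Fin n ⊕ Fin n) ℂ

/-- The involution `f ↦ f*`: conjugate the coefficients and swap `z_j ↔ z̄_j`. -/
def hermStar (n : ℕ) : CPoly n →+* CPoly n :=
  (MvPolynomial.rename (Sum.swap : Fin n ⊕ Fin n → Fin n ⊕ Fin n)).toRingHom.comp
    (MvPolynomial.map (starRingEnd ℂ))

/-- The inclusion of the holomorphic polynomials `ℂ[z]` into `ℂ[z,z̄]`. -/
def hol (n : ℕ) : MvPolynomial (Fin n) ℂ →ₐ[ℂ] CPoly n :=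
  MvPolynomial.rename Sum.inl

/-- Evaluation `f(a,b)` (substituting `a` for `z` and `b` for `z̄`). -/
def evalPair {n : ℕ} (a b : Fin n → ℂ) (f : CPoly n) : ℂ :=
  MvPolynomial.eval (Sum.elim a b) f

/-- Evaluation `f(a) := f(a, ā)`. -/
def evalAt {n : ℕ} (a : Fin n → ℂ) (f : CPoly n) : ℂ :=
  evalPair a (fun j => (starRingEnd ℂ) (a j)) f

/-- `‖z‖² = |z_1|² + ⋯ + |z_n|²`. -/
def normZ (n : ℕ) : CPoly n := ∑ j : Fin n, X (Sum.inl j) * X (Sum.inr j)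

/-- `Σ_h`: hermitian sums of squares `∑ |p_i|²`, `p_i ∈ ℂ[z]` holomorphic. -/
def SigmaH (n : ℕ) : Set (CPoly n) :=
  {f | ∃ (k : ℕ) (p : Fin k → MvPolynomial (Fin n) ℂ),
    f = ∑ i, hol n (p i) * hermStar n (hol n (p i))}

/-- `Σ`: sums of squares `∑ |p_i|²`, `p_i ∈ ℂ[z,z̄]`. -/
def SigmaFull (n : ℕ) : Set (CPoly n) :=
  {f | ∃ (k : ℕ) (p : Fin k → CPoly n), f = ∑ i, p i * hermStar n (p i)}

/-- Ideals `I ⊆ ℝ[x,y]`, viewed as sets of `*`-fixed elements of `ℂ[z,z̄]`. -/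
def IsRealIdeal (n : ℕ) (I : Set (CPoly n)) : Prop :=
  (∀ f ∈ I, hermStar n f = f) ∧ (0 : CPoly n) ∈ I ∧
    (∀ f ∈ I, ∀ g ∈ I, f + g ∈ I) ∧
    ∀ f : CPoly n, hermStar n f = f → ∀ g ∈ I, f * g ∈ I

/-- The semiring `Σ_h + I`. -/
def SigmaHPlus (n : ℕ) (I : Set (CPoly n)) : Set (CPoly n) :=
  {f | ∃ s ∈ SigmaH n, ∃ g ∈ I, f = s + g}

/-- The real zero set `V_ℝ(I) ⊆ ℂⁿ`. -/
def VR (n : ℕ) (I : Set (CPoly n)) : Set (Fin n → ℂ) :=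
  {a | ∀ f ∈ I, evalAt a f = 0}

/-- A subset `M` of `ℝ[x,y]` is archimedean if for every real `f` there is `c ∈ ℝ`
with `c ± f ∈ M`. -/
def IsArchSet (n : ℕ) (M : Set (CPoly n)) : Prop :=
  ∀ f : CPoly n, hermStar n f = f →
    ∃ c : ℝ, (C (c : ℂ) + f) ∈ M ∧ (C (c : ℂ) - f) ∈ M

/-- Hermitian modules in `ℝ[x,y]`. -/
def IsHermitianModule (n : ℕ) (M : Set (CPoly n)) : Prop :=
  (∀ f ∈ M, hermStar n f = f) ∧ (1 : CPoly n) ∈ M ∧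
    (∀ f ∈ M, ∀ g ∈ M, f + g ∈ M) ∧
    ∀ s ∈ SigmaH n, ∀ f ∈ M, s * f ∈ M

/-- The closed set `X_M ⊆ ℂⁿ` associated with a hermitian module. -/
def XM (n : ℕ) (M : Set (CPoly n)) : Set (Fin n → ℂ) :=
  {a | ∀ g ∈ M, 0 ≤ (evalAt a g).re}

/-- Hereditary calculus `ψ_T` for a tuple of bounded operators:
`ψ_T(z^α z̄^β) = T^{*β} T^α` (adjoints to the left). -/
def psiOp {n : ℕ} {E : Type u} [NormedAddCommGroup E] [InnerProductSpace ℂ E]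
    [CompleteSpace E] (T : Fin n → E →L[ℂ] E) (f : CPoly n) : E →L[ℂ] E :=
  ∑ m ∈ f.support, f.coeff m •
    ((List.ofFn fun j => (ContinuousLinearMap.adjoint (T j)) ^ (m (Sum.inr j))).prod *
     (List.ofFn fun j => (T j) ^ (m (Sum.inl j))).prod)

/-- Hereditary calculus `ψ_T` for a tuple of matrices. -/
def psiMat {n m : ℕ} (T : Fin n → Matrix (Fin m) (Fin m) ℂ) (f : CPoly n) :
    Matrix (Fin m) (Fin m) ℂ :=
  ∑ mo ∈ f.support, f.coeff mo •
    ((List.ofFn fun j => ((T j)ᴴ) ^ (mo (Sum.inr j))).prod *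
     (List.ofFn fun j => (T j) ^ (mo (Sum.inl j))).prod)

/-- A commuting tuple `T` on a Hilbert space `E` is subnormal if it extends to a
commuting tuple of bounded normal operators on a larger Hilbert space `E'`,
leaving (the image of) `E` invariant. -/
def IsSubnormal {n : ℕ} {E : Type u} [NormedAddCommGroup E] [InnerProductSpace ℂ E]
    [CompleteSpace E] (T : Fin n → E →L[ℂ] E) : Prop :=
  ∃ (E' : Type u) (_ : NormedAddCommGroup E') (_ : InnerProductSpace ℂ E')
    (_ : CompleteSpace E') (ι : E →ₗᵢ[ℂ] E') (N : Fin n → E' →L[ℂ] E'),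
      (∀ i j, Commute (N i) (N j)) ∧
      (∀ j, Commute (N j) (ContinuousLinearMap.adjoint (N j))) ∧
      ∀ j x, N j (ι x) = ι (T j x)

/-- The "diamond" ideal `I(a,b)`. -/
def Iab {n : ℕ} (a b : Fin n → ℂ) : Set (CPoly n) :=
  {f | evalPair a (fun j => (starRingEnd ℂ) (a j)) f = 0 ∧
       evalPair a (fun j => (starRingEnd ℂ) (b j)) f = 0 ∧
       evalPair b (fun j => (starRingEnd ℂ) (a j)) f = 0 ∧
       evalPair b (fun j => (starRingEnd ℂ) (b j)) f = 0}

/-- The degenerate ideal `J(a,U)`. -/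
def Jau {n : ℕ} (a : Fin n → ℂ) (U : Matrix (Fin n) (Fin n) ℂ) : Set (CPoly n) :=
  {f | evalAt a f = 0 ∧
    U.mulVec (fun k => evalAt a (pderiv (Sum.inl k) f)) = 0 ∧
    (U.map (starRingEnd ℂ)).mulVec (fun k => evalAt a (pderiv (Sum.inr k) f)) = 0 ∧
    Matrix.trace
      (U * Matrix.of fun j k => evalAt a (pderiv (Sum.inr k) (pderiv (Sum.inl j) f))) = 0}


/-- States on `A` that are nonnegative on `M`. -/
def stateSet {A : Type*} [CommRing A] [Algebra ℝ A] (M : Set A) : Set (A → ℝ) :=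
  {L | (∀ x y, L (x + y) = L x + L y) ∧ (∀ (c : ℝ) x, L (c • x) = c * L x) ∧ L 1 = 1 ∧
    ∀ m ∈ M, 0 ≤ L m}

theorem stateSet_isClosed {A : Type*} [CommRing A] [Algebra ℝ A] (M : Set A) :
    IsClosed (stateSet M) := by
  have h : stateSet M = (⋂ x, ⋂ y, {L : A → ℝ | L (x + y) = L x + L y}) ∩
      ((⋂ c : ℝ, ⋂ x, {L : A → ℝ | L (c • x) = c * L x}) ∩
      ({L : A → ℝ | L 1 = 1} ∩ (⋂ m ∈ M, {L : A → ℝ | 0 ≤ L m}))) := by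
    ext L; simp [stateSet]
  rw [h]
  refine IsClosed.inter (isClosed_iInter fun x => isClosed_iInter fun y => ?_)
    (IsClosed.inter (isClosed_iInter fun x => isClosed_iInter fun y => ?_)
    (IsClosed.inter ?_ (isClosed_biInter fun m _ => ?_)))
  · exact isClosed_eq (by fun_prop) (by fun_prop)
  · exact isClosed_eq (by fun_prop) (by fun_prop)
  · exact isClosed_eq (by fun_prop) (by fun_prop)
  · exact isClosed_le (by fun_prop) (by fun_prop)

theorem state_bound {A : Type*} [CommRing A] [Algebra ℝ A] {M : Set A} {L : A → ℝ}
    (hL : L ∈ stateSet M) {c : ℝ} {g : A} (h1 : c • (1 : A) + g ∈ M) (h2 : c • (1 : A) - g ∈ M) :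
    |L g| ≤ c := by
  obtain ⟨ha, hs, h1', hM⟩ := hL
  have e1 := hM _ h1
  have e2 := hM _ h2
  have h3 : c • (1 : A) - g = c • (1 : A) + (-1 : ℝ) • g := by simp [sub_eq_add_neg]
  rw [h3] at e2
  rw [ha, hs, h1'] at e1
  rw [ha, hs, hs, h1'] at e2
  rw [abs_le]; constructor <;> linarith

theorem state_compact {A : Type*} [CommRing A] [Algebra ℝ A] (M : Set A)
    (arch : ∀ f : A, ∃ c : ℝ, c • (1 : A) + f ∈ M ∧ c • (1 : A) - f ∈ M) :
    IsCompact (stateSet M) := by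
  choose c hc1 hc2 using arch
  have : IsCompact (Set.pi Set.univ fun g : A => Set.Icc (-(c g)) (c g)) :=
    isCompact_univ_pi fun g => isCompact_Icc
  refine this.of_isClosed_subset (stateSet_isClosed M) ?_
  intro L hL g _
  have := state_bound hL (hc1 g) (hc2 g)
  rw [abs_le] at this
  exact this

theorem exists_state {A : Type*} [CommRing A] [Algebra ℝ A] (M : Set A)
    (hadd : ∀ x ∈ M, ∀ y ∈ M, x + y ∈ M) (hsm : ∀ c : ℝ, 0 ≤ c → ∀ x ∈ M, c • x ∈ M)
    (h1 : (1 : A) ∈ M)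
    (arch : ∀ f : A, ∃ c : ℝ, c • (1 : A) + f ∈ M ∧ c • (1 : A) - f ∈ M)
    (f : A) (hf : f ∉ M) : ∃ L ∈ stateSet M, L f ≤ 0 := by
  have h0 : (0 : A) ∈ M := by simpa using hsm 0 le_rfl 1 h1
  have hneg : (-1 : A) ∉ M := by
    intro h
    apply hf
    obtain ⟨c, hc, -⟩ := arch f
    have : f = (c • (1 : A) + f) + (|c| • (-1 : A) + (|c| - c) • (1 : A)) := by
      simp only [sub_smul, smul_neg]; abel
    rw [this]
    exact hadd _ hc _ (hadd _ (hsm _ (abs_nonneg _) _ h) _ (hsm _ (by linarith [le_abs_self c]) _ h1))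
  let s : PointedCone ℝ A :=
    { carrier := {x | ∃ m ∈ M, ∃ l : ℝ, 0 ≤ l ∧ x = m - l • f}
      add_mem' := by
        rintro _ _ ⟨m, hm, l, hl, rfl⟩ ⟨m', hm', l', hl', rfl⟩
        exact ⟨m + m', hadd _ hm _ hm', l + l', add_nonneg hl hl', by rw [add_smul]; abel⟩
      zero_mem' := ⟨0, h0, 0, le_rfl, by simp⟩
      smul_mem' := by
        rintro ⟨c, hc⟩ _ ⟨m, hm, l, hl, rfl⟩
        refine ⟨c • m, hsm c hc m hm, c * l, mul_nonneg hc hl, ?_⟩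
        change c • (m - l • f) = _
        rw [smul_sub, mul_smul] }
  have hs : ∀ x, x ∈ s ↔ ∃ m ∈ M, ∃ l : ℝ, 0 ≤ l ∧ x = m - l • f := fun x => Iff.rfl
  have hne : (1 : A) ≠ 0 := by
    intro h; apply hneg; rw [h, neg_zero]; exact h0
  have hH : ∀ c : ℝ, c • (1 : A) = 0 → RingHom.id ℝ c • (1 : ℝ) = 0 := by
    intro c hc; simp [hne] at hc; simp [hc]
  let F : A →ₗ.[ℝ] ℝ := LinearPMap.mkSpanSingleton' (σ := RingHom.id ℝ) (1 : A) (1 : ℝ) hH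
  have hFd : ∀ c : ℝ, c • (1 : A) ∈ F.domain := fun c =>
    Submodule.mem_span_singleton.2 ⟨c, rfl⟩
  have hFa : ∀ c : ℝ, F ⟨c • (1 : A), hFd c⟩ = c := by
    intro c
    have := LinearPMap.mkSpanSingleton'_apply (σ := RingHom.id ℝ) (1 : A) (1 : ℝ) hH c (hFd c)
    exact this.trans (by simp)
  obtain ⟨g, hg1, hg2⟩ := riesz_extension s F (by
      rintro ⟨x, hx⟩ hxs
      obtain ⟨c, rfl⟩ := Submodule.mem_span_singleton.1 hx
      rw [hFa]
      by_contra hc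
      push Not at hc
      obtain ⟨m, hm, l, hl, e⟩ := (hs _).1 hxs
      change c • (1 : A) = _ at e
      rcases hl.eq_or_lt with rfl | hl
      · apply hneg
        have := hsm (-c)⁻¹ (by rw [inv_nonneg]; linarith) m hm
        rw [zero_smul, sub_zero] at e
        rw [← e, smul_smul, inv_neg, neg_mul, inv_mul_cancel₀ hc.ne, neg_smul, one_smul] at this
        exact this
      · apply hf
        have h2 : l • f = m + (-c) • (1 : A) := by
          rw [neg_smul, e]; abel
        have := hsm l⁻¹ (inv_nonneg.2 hl.le) _ (hadd _ hm _ (hsm (-c) (by linarith) 1 h1))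
        rwa [← h2, smul_smul, inv_mul_cancel₀ hl.ne', one_smul] at this)
    (by
      intro y
      obtain ⟨c, hc, -⟩ := arch y
      exact ⟨⟨c • 1, hFd c⟩, (hs _).2 ⟨_, hc, 0, le_rfl, by simp⟩⟩)
  refine ⟨g, ⟨fun x y => map_add g x y, fun c x => by simp, ?_, fun m hm => ?_⟩, ?_⟩
  · have := hg1 ⟨(1 : ℝ) • 1, hFd 1⟩
    rw [hFa] at this
    simpa using this
  · exact hg2 m ((hs _).2 ⟨m, hm, 0, le_rfl, by simp⟩)
  · have := hg2 (-f) ((hs _).2 ⟨0, h0, 1, zero_le_one, by simp⟩)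
    rw [map_neg] at this; linarith

theorem extreme_mul {A : Type*} [CommRing A] [Algebra ℝ A] (T M : Set A)
    (hT1 : (1 : A) ∈ T) (hTadd : ∀ x ∈ T, ∀ y ∈ T, x + y ∈ T)
    (hTM : ∀ x ∈ T, ∀ y ∈ M, x * y ∈ M) (h1 : (1 : A) ∈ M)
    (arch : ∀ f : A, ∃ c : ℝ, c • (1 : A) + f ∈ T ∧ c • (1 : A) - f ∈ T)
    (L : A → ℝ) (hL : L ∈ (stateSet M).extremePoints ℝ) (x y : A) :
    L (x * y) = L x * L y := by
  have hTM' : ∀ x ∈ T, x ∈ M := fun x hx => by simpa using hTM x hx 1 h1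
  have hLs := hL.1
  obtain ⟨ha, hs, hL1, hM⟩ := hL.1
  have hsub : ∀ u v, L (u - v) = L u - L v := by
    intro u v
    have := ha (u - v) v
    rw [sub_add_cancel] at this; linarith
  -- multiplicativity with one factor in `T`
  have key : ∀ t ∈ T, ∀ g, L (t * g) = L t * L g := by
    intro t ht g
    obtain ⟨c0, -, hc0⟩ := arch t
    have hb : L t ≤ c0 := by
      have := hM _ (hTM' _ hc0)
      rw [hsub, hs, hL1] at this; linarith
    have ht0 : 0 ≤ L t := hM _ (hTM' _ ht)
    set c := c0 + 1 with hc
    have hct : c • (1 : A) - t ∈ T := by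
      have : c • (1 : A) - t = (c0 • (1 : A) - t) + 1 := by
        rw [hc, add_smul, one_smul]; abel
      rw [this]; exact hTadd _ hc0 _ hT1
    rcases ht0.eq_or_lt with h0 | h0
    · obtain ⟨d, hd1, hd2⟩ := arch g
      have e1 := hM _ (hTM _ ht _ (hTM' _ hd1))
      have e2 := hM _ (hTM _ ht _ (hTM' _ hd2))
      rw [mul_add, ha, mul_smul_comm, hs, mul_one, ← h0] at e1
      rw [mul_sub, hsub, mul_smul_comm, hs, mul_one, ← h0] at e2
      rw [← h0]; linarith
    · have hc' : 0 < c - L t := by linarith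
      have hcp : 0 < c := by linarith
      have hLc : L (c • (1 : A) - t) = c - L t := by rw [hsub, hs, hL1, mul_one]
      have m1 : (fun g => (L t)⁻¹ * L (t * g)) ∈ stateSet M := by
        refine ⟨fun u v => ?_, fun d u => ?_, ?_, fun m hm => ?_⟩
        · simp only [mul_add, ha]
        · simp only [mul_smul_comm, hs]; ring
        · simp only [mul_one]; exact inv_mul_cancel₀ h0.ne'
        · exact mul_nonneg (inv_nonneg.2 h0.le) (hM _ (hTM _ ht _ hm))
      have m2 : (fun g => (c - L t)⁻¹ * L ((c • (1 : A) - t) * g)) ∈ stateSet M := by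
        refine ⟨fun u v => ?_, fun d u => ?_, ?_, fun m hm => ?_⟩
        · simp only [mul_add, ha]
        · simp only [mul_smul_comm, hs]; ring
        · simp only [mul_one, hLc]; exact inv_mul_cancel₀ hc'.ne'
        · exact mul_nonneg (inv_nonneg.2 hc'.le) (hM _ (hTM _ hct _ hm))
      have := (mem_extremePoints_iff_left.1 hL).2 _ m1 _ m2 ⟨L t / c, (c - L t) / c, by positivity, by positivity,
        by field_simp; ring, by
          funext g
          simp only [Pi.add_apply, Pi.smul_apply, smul_eq_mul, sub_mul, smul_mul_assoc, one_mul,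
            hsub, hs]
          field_simp
          ring⟩
      have : (L t)⁻¹ * L (t * g) = L g := congrFun this g
      rw [← this]; field_simp
  obtain ⟨c, hc, -⟩ := arch x
  have := key _ hc y
  rw [add_mul, ha, ha, smul_mul_assoc, one_mul, hs, hs, hL1] at this
  linarith

theorem repr_abs {A : Type*} [CommRing A] [Algebra ℝ A] (T M : Set A)
    (hTc : ∀ c : ℝ, 0 ≤ c → c • (1 : A) ∈ T) (hTadd : ∀ x ∈ T, ∀ y ∈ T, x + y ∈ T)
    (hadd : ∀ x ∈ M, ∀ y ∈ M, x + y ∈ M)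
    (hTM : ∀ x ∈ T, ∀ y ∈ M, x * y ∈ M) (h1 : (1 : A) ∈ M)
    (arch : ∀ f : A, ∃ c : ℝ, c • (1 : A) + f ∈ T ∧ c • (1 : A) - f ∈ T)
    (f : A) (hf : ∀ φ : A →ₐ[ℝ] ℝ, (∀ m ∈ M, 0 ≤ φ m) → 0 < φ f) : f ∈ M := by
  by_contra hfM
  have hTM' : ∀ x ∈ T, x ∈ M := fun x hx => by simpa using hTM x hx 1 h1
  have archM : ∀ f : A, ∃ c : ℝ, c • (1 : A) + f ∈ M ∧ c • (1 : A) - f ∈ M := fun f => by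
    obtain ⟨c, a, b⟩ := arch f
    exact ⟨c, hTM' _ a, hTM' _ b⟩
  obtain ⟨L0, hL0, hL0f⟩ := exists_state M hadd
    (fun c hc x hx => by simpa using hTM _ (hTc c hc) x hx) h1 archM f hfM
  have hK := state_compact M archM
  obtain ⟨L1, hL1, hmin⟩ := hK.exists_isMinOn ⟨L0, hL0⟩
    (f := fun L : A → ℝ => L f) (by fun_prop)
  have hFc : IsCompact (stateSet M ∩ {L : A → ℝ | L f = L1 f}) :=
    hK.inter_right (isClosed_eq (by fun_prop) (by fun_prop))
  obtain ⟨L, hL⟩ := hFc.extremePoints_nonempty ⟨L1, hL1, rfl⟩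
  have hLe : L ∈ (stateSet M).extremePoints ℝ := by
    rw [mem_extremePoints_iff_left] at hL ⊢
    refine ⟨hL.1.1, fun x hx y hy hxy => ?_⟩
    have hxf : L1 f ≤ x f := hmin hx
    have hyf : L1 f ≤ y f := hmin hy
    have hLf : L f = L1 f := hL.1.2
    obtain ⟨a, b, ha, hb, hab, e⟩ := id hxy
    have e' := congrFun e f
    simp only [Pi.add_apply, Pi.smul_apply, smul_eq_mul] at e'
    rw [hLf] at e'
    have p1 := mul_nonneg ha.le (sub_nonneg.2 hxf)
    have p2 := mul_nonneg hb.le (sub_nonneg.2 hyf)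
    have p3 : a * (x f - L1 f) + b * (y f - L1 f) = 0 := by
      have : L1 f = (a + b) * L1 f := by rw [hab, one_mul]
      linear_combination e' + this
    have q1 : a * (x f - L1 f) = 0 := by linarith
    have q2 : b * (y f - L1 f) = 0 := by linarith
    have r1 : x f = L1 f := by
      rcases mul_eq_zero.1 q1 with h | h <;> linarith
    have r2 : y f = L1 f := by
      rcases mul_eq_zero.1 q2 with h | h <;> linarith
    exact hL.2 x ⟨hx, r1⟩ y ⟨hy, r2⟩ hxy
  have hmul := extreme_mul T M (by simpa using hTc 1 zero_le_one) hTadd hTM h1 arch L hLe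
  obtain ⟨ha, hs, hL1', hM⟩ := hLe.1
  let φ : A →ₐ[ℝ] ℝ := AlgHom.ofLinearMap
    { toFun := L, map_add' := ha, map_smul' := by intro c x; simp [hs] } hL1' hmul
  have h := hf φ hM
  have hLf : L f = L1 f := hL.1.2
  have h3 : L1 f ≤ L0 f := hmin hL0
  have h4 : φ f = L f := rfl
  linarith

theorem hermStar_C (n : ℕ) (c : ℂ) : hermStar n (C c) = C ((starRingEnd ℂ) c) := by
  simp [hermStar]

theorem hermStar_inl (n : ℕ) (j : Fin n) : hermStar n (X (Sum.inl j)) = X (Sum.inr j) := by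
  simp [hermStar]

theorem hermStar_inr (n : ℕ) (j : Fin n) : hermStar n (X (Sum.inr j)) = X (Sum.inl j) := by
  simp [hermStar]

theorem hermStar_invol (n : ℕ) (f : CPoly n) : hermStar n (hermStar n f) = f := by
  induction f using MvPolynomial.induction_on with
  | C c => simp [hermStar_C]
  | add p q hp hq => rw [map_add, map_add, hp, hq]
  | mul_X p i hp =>
    rw [map_mul, map_mul, hp]
    rcases i with j | j <;> simp [hermStar_inl, hermStar_inr]

theorem real_smul_eq (n : ℕ) (c : ℝ) (f : CPoly n) : c • f = C (c : ℂ) * f := by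
  rw [← MvPolynomial.smul_eq_C_mul]
  ext m
  simp [MvPolynomial.coeff_smul]

/-- The real form `ℝ[x,y]` of `ℂ[z,z̄]`. -/
def realForm (n : ℕ) : Subalgebra ℝ (CPoly n) where
  carrier := {f | hermStar n f = f}
  mul_mem' := by intro a b ha hb; simp only [Set.mem_ofPred_eq] at *; rw [map_mul, ha, hb]
  add_mem' := by intro a b ha hb; simp only [Set.mem_ofPred_eq] at *; rw [map_add, ha, hb]
  algebraMap_mem' := by
    intro c
    rw [Set.mem_ofPred_eq, Algebra.algebraMap_eq_smul_one, real_smul_eq, mul_one, hermStar_C]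
    simp

theorem mem_realForm {n : ℕ} {f : CPoly n} : f ∈ realForm n ↔ hermStar n f = f := Iff.rfl

theorem zero_mem_SigmaH (n : ℕ) : (0 : CPoly n) ∈ SigmaH n :=
  ⟨0, fun _ => 0, by simp⟩

theorem sq_mem_SigmaH (n : ℕ) (p : MvPolynomial (Fin n) ℂ) :
    hol n p * hermStar n (hol n p) ∈ SigmaH n :=
  ⟨1, fun _ => p, by simp⟩

theorem add_mem_SigmaH (n : ℕ) {f g : CPoly n} (hf : f ∈ SigmaH n) (hg : g ∈ SigmaH n) :
    f + g ∈ SigmaH n := by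
  obtain ⟨k, p, rfl⟩ := hf
  obtain ⟨l, q, rfl⟩ := hg
  exact ⟨k + l, Fin.append p q, by simp [Fin.sum_univ_add]⟩

theorem sum_mem_SigmaH (n : ℕ) {ι : Type*} (s : Finset ι) (f : ι → CPoly n)
    (hf : ∀ i ∈ s, f i ∈ SigmaH n) : ∑ i ∈ s, f i ∈ SigmaH n :=
  Finset.sum_induction f (· ∈ SigmaH n) (fun _ _ => add_mem_SigmaH n) (zero_mem_SigmaH n) hf

theorem mul_mem_SigmaH (n : ℕ) {f g : CPoly n} (hf : f ∈ SigmaH n) (hg : g ∈ SigmaH n) :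
    f * g ∈ SigmaH n := by
  obtain ⟨k, p, rfl⟩ := hf
  obtain ⟨l, q, rfl⟩ := hg
  rw [Finset.sum_mul_sum]
  refine sum_mem_SigmaH n _ _ fun i _ => sum_mem_SigmaH n _ _ fun j _ => ?_
  have := sq_mem_SigmaH n (p i * q j)
  rw [map_mul, map_mul] at this
  convert this using 1
  ring

theorem const_mem_SigmaH (n : ℕ) {c : ℝ} (hc : 0 ≤ c) : (C (c : ℂ) : CPoly n) ∈ SigmaH n := by
  have := sq_mem_SigmaH n (C ((Real.sqrt c : ℝ) : ℂ))
  have h2 : hol n (C ((Real.sqrt c : ℝ) : ℂ)) = C ((Real.sqrt c : ℝ) : ℂ) := by simp [hol]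
  rw [h2, hermStar_C, ← C_mul, conj_ofReal, ← ofReal_mul, Real.mul_self_sqrt hc] at this
  exact this

theorem SigmaH_star (n : ℕ) {f : CPoly n} (hf : f ∈ SigmaH n) : hermStar n f = f := by
  obtain ⟨k, p, rfl⟩ := hf
  rw [map_sum]
  refine Finset.sum_congr rfl fun i _ => ?_
  rw [map_mul, hermStar_invol, mul_comm]

/-- Real part in `ℝ[x,y]`. -/
def rePart {n : ℕ} (g : CPoly n) : realForm n :=
  ⟨C (1 / 2) * (g + hermStar n g), by
    rw [mem_realForm, map_mul, map_add, hermStar_invol, hermStar_C, add_comm]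
    have : (starRingEnd ℂ) 2 = 2 := map_ofNat _ 2
    rw [map_div₀, map_one, this]⟩

/-- Imaginary part in `ℝ[x,y]`. -/
def imPart {n : ℕ} (g : CPoly n) : realForm n :=
  ⟨C (-I / 2) * (g - hermStar n g), by
    rw [mem_realForm, map_mul, map_sub, hermStar_invol, hermStar_C]
    simp only [map_div₀, map_neg, conj_I, neg_neg]
    have : (starRingEnd ℂ) 2 = 2 := map_ofNat _ 2
    rw [this, neg_div, C_neg]
    ring⟩

theorem re_add_im {n : ℕ} (g : CPoly n) :
    (rePart g : CPoly n) + C I * (imPart g : CPoly n) = g := by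
  simp only [rePart, imPart]
  rw [← mul_assoc, ← C_mul]
  have : I * (-I / 2) = 1 / 2 := by
    rw [mul_div_assoc', mul_neg, I_mul_I, neg_neg]
  rw [this, ← mul_add, add_add_sub_cancel, ← two_mul, ← mul_assoc]
  have h2 : (2 : CPoly n) = C 2 := (map_ofNat C 2).symm
  rw [h2, ← C_mul]; norm_num

theorem rePart_unique {n : ℕ} (g : CPoly n) (u v : realForm n)
    (h : g = (u : CPoly n) + C I * (v : CPoly n)) : rePart g = u ∧ imPart g = v := by
  have hu : hermStar n u = u := u.2
  have hv : hermStar n v = v := v.2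
  have hg : hermStar n g = (u : CPoly n) - C I * (v : CPoly n) := by
    rw [h, map_add, map_mul, hu, hv, hermStar_C, conj_I, C_neg]; ring
  have h2 : (2 : CPoly n) = C 2 := (map_ofNat C 2).symm
  constructor
  · apply Subtype.ext
    simp only [rePart]
    rw [hg, h, add_add_sub_cancel, ← two_mul, ← mul_assoc, h2, ← C_mul]; norm_num
  · apply Subtype.ext
    simp only [imPart]
    rw [hg, h, add_sub_sub_cancel, ← two_mul, ← mul_assoc, ← mul_assoc, h2, ← C_mul, ← C_mul]
    have : -I / 2 * 2 * I = 1 := by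
      rw [div_mul_cancel₀ _ (two_ne_zero), neg_mul, I_mul_I, neg_neg]
    rw [this]; simp

theorem char_eval {n : ℕ} (φ : realForm n →ₐ[ℝ] ℝ) :
    ∃ a : Fin n → ℂ, ∀ f : realForm n, evalAt a (f : CPoly n) = (φ f : ℂ) := by
  let Φ : CPoly n → ℂ := fun g => (φ (rePart g) : ℂ) + I * (φ (imPart g) : ℂ)
  have hu : ∀ (u v : realForm n), Φ ((u : CPoly n) + C I * (v : CPoly n)) = φ u + I * φ v := by
    intro u v
    obtain ⟨h1, h2⟩ := rePart_unique _ u v rfl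
    simp only [Φ, h1, h2]
  have hadd : ∀ g h, Φ (g + h) = Φ g + Φ h := by
    intro g h
    have : g + h = ((rePart g + rePart h : realForm n) : CPoly n)
        + C I * ((imPart g + imPart h : realForm n) : CPoly n) := by
      conv_lhs => rw [← re_add_im g, ← re_add_im h]
      push_cast; ring
    rw [this, hu]
    simp only [Φ, map_add, ofReal_add]; ring
  have hI2 : (C I : CPoly n) * C I = -1 := by rw [← C_mul, I_mul_I]; simp
  have hmul : ∀ g h, Φ (g * h) = Φ g * Φ h := by
    intro g h
    have : g * h = ((rePart g * rePart h - imPart g * imPart h : realForm n) : CPoly n)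
        + C I * ((rePart g * imPart h + imPart g * rePart h : realForm n) : CPoly n) := by
      conv_lhs => rw [← re_add_im g, ← re_add_im h]
      push_cast
      linear_combination ((imPart g : CPoly n) * (imPart h : CPoly n)) * hI2
    rw [this, hu]
    simp only [Φ, map_add, map_sub, map_mul, ofReal_add, ofReal_sub, ofReal_mul]
    linear_combination (-(φ (imPart g) : ℂ) * (φ (imPart h) : ℂ)) * I_mul_I
  have hC : ∀ c : ℂ, Φ (C c) = c := by
    intro c
    have : (C c : CPoly n) = ((algebraMap ℝ (realForm n) c.re : realForm n) : CPoly n)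
        + C I * ((algebraMap ℝ (realForm n) c.im : realForm n) : CPoly n) := by
      simp only [Algebra.algebraMap_eq_smul_one, Subalgebra.coe_smul, Subalgebra.coe_one,
        real_smul_eq, mul_one]
      rw [← C_mul, ← C_add]
      congr 1
      conv_lhs => rw [← re_add_im c]
      ring
    rw [this, hu, AlgHom.commutes, AlgHom.commutes]
    simp only [Algebra.algebraMap_self, RingHom.id_apply]
    conv_rhs => rw [← Complex.re_add_im c]
    ring
  have hstar : ∀ g, Φ (hermStar n g) = (starRingEnd ℂ) (Φ g) := by
    intro g
    have : hermStar n g = (rePart g : CPoly n) + C I * ((-imPart g : realForm n) : CPoly n) := by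
      have h1 : hermStar n (rePart g : CPoly n) = rePart g := (rePart g).2
      have h2 : hermStar n (imPart g : CPoly n) = imPart g := (imPart g).2
      conv_lhs => rw [← re_add_im g]
      rw [map_add, map_mul, h1, h2, hermStar_C, conj_I, C_neg]
      push_cast; ring
    rw [this, hu]
    simp [Φ]
  let a : Fin n → ℂ := fun j => Φ (X (Sum.inl j))
  have hev : ∀ g, evalAt a g = Φ g := by
    intro g
    induction g using MvPolynomial.induction_on with
    | C c => rw [hC]; simp [evalAt, evalPair]
    | add p q hp hq => rw [hadd, ← hp, ← hq]; simp [evalAt, evalPair]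
    | mul_X p i hp =>
      rw [hmul, ← hp]
      rcases i with j | j
      · simp [evalAt, evalPair, a]
      · rw [← hermStar_inl, hstar, hermStar_inl]
        simp [evalAt, evalPair, a]
  refine ⟨a, fun f => ?_⟩
  rw [hev]
  have := hu f 0
  simpa using this

/-- Proposition `vaquillthm`: if `I ⊆ ℝ[x,y]` is an ideal with the archimedean property
(A), then for any `p_1, …, p_r ∈ ℝ[x,y]` the hermitian module
`M = I + Σ_h + p_1 Σ_h + ⋯ + p_r Σ_h` has the Quillen property on
`X_M = V_ℝ(I) ∩ {p_1 ≥ 0, …, p_r ≥ 0}`. -/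
theorem statement14 (n : ℕ) (hn : 0 < n) (I : Set (CPoly n)) (hI : IsRealIdeal n I)
    (hA : IsArchSet n (SigmaHPlus n I)) (r : ℕ) (p : Fin r → CPoly n)
    (hp : ∀ i, hermStar n (p i) = p i) :
    ∀ f : CPoly n, hermStar n f = f →
      (∀ a : Fin n → ℂ, a ∈ VR n I → (∀ i, 0 ≤ (evalAt a (p i)).re) →
        0 < (evalAt a f).re) →
      ∃ g ∈ I, ∃ s₀ ∈ SigmaH n, ∃ s : Fin r → CPoly n,
        (∀ i, s i ∈ SigmaH n) ∧ f = g + s₀ + ∑ i, p i * s i := by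
  intro f hf hpos
  obtain ⟨hIs, hI0, hIadd, hImul⟩ := hI
  let T : Set (realForm n) := {t | (t : CPoly n) ∈ SigmaHPlus n I}
  let M : Set (realForm n) := {m | ∃ g ∈ I, ∃ s₀ ∈ SigmaH n, ∃ s : Fin r → CPoly n,
        (∀ i, s i ∈ SigmaH n) ∧ (m : CPoly n) = g + s₀ + ∑ i, p i * s i}
  have hc1 : ∀ c : ℝ, ((c • (1 : realForm n) : realForm n) : CPoly n) = C (c : ℂ) := by
    intro c
    rw [Subalgebra.coe_smul, Subalgebra.coe_one, real_smul_eq, mul_one]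
  have hone : (1 : CPoly n) ∈ SigmaH n := by simpa using const_mem_SigmaH n zero_le_one
  have main : (⟨f, hf⟩ : realForm n) ∈ M := by
    refine repr_abs T M ?_ ?_ ?_ ?_ ?_ ?_ _ ?_
    · intro c hc
      refine ⟨_, const_mem_SigmaH n hc, 0, hI0, ?_⟩
      rw [hc1, add_zero]
    · rintro x ⟨s, hs, g, hg, e⟩ y ⟨s', hs', g', hg', e'⟩
      refine ⟨s + s', add_mem_SigmaH n hs hs', g + g', hIadd _ hg _ hg', ?_⟩
      rw [Subalgebra.coe_add, e, e']; ring
    · rintro x ⟨g, hg, s₀, hs₀, s, hs, e⟩ y ⟨g', hg', s₀', hs₀', s', hs', e'⟩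
      refine ⟨g + g', hIadd _ hg _ hg', s₀ + s₀', add_mem_SigmaH n hs₀ hs₀', fun i => s i + s' i,
        fun i => add_mem_SigmaH n (hs i) (hs' i), ?_⟩
      rw [Subalgebra.coe_add, e, e']
      simp only [mul_add, Finset.sum_add_distrib]; ring
    · rintro x ⟨t, ht, h, hh, e⟩ y ⟨g, hg, s₀, hs₀, s, hs, e'⟩
      refine ⟨t * g + (y : CPoly n) * h,
        hIadd _ (hImul _ (SigmaH_star n ht) _ hg) _ (hImul _ y.2 _ hh),
        t * s₀, mul_mem_SigmaH n ht hs₀, fun i => t * s i,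
        fun i => mul_mem_SigmaH n ht (hs i), ?_⟩
      rw [Subalgebra.coe_mul, e, add_mul, mul_comm h]
      conv_lhs => rw [e']
      rw [mul_add, mul_add, Finset.mul_sum, e']
      simp only [mul_left_comm t]
      ring
    · exact ⟨0, hI0, 1, hone, fun _ => 0, fun _ => zero_mem_SigmaH n, by simp⟩
    · intro g
      obtain ⟨c, h1, h2⟩ := hA g g.2
      refine ⟨c, ?_, ?_⟩
      · change ((c • (1 : realForm n) + g : realForm n) : CPoly n) ∈ SigmaHPlus n I
        rw [Subalgebra.coe_add, hc1]; exact h1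
      · change ((c • (1 : realForm n) - g : realForm n) : CPoly n) ∈ SigmaHPlus n I
        rw [AddSubgroupClass.coe_sub, hc1]; exact h2
    · intro φ hφ
      obtain ⟨a, ha⟩ := char_eval φ
      have hfa := ha ⟨f, hf⟩
      have hIM : ∀ g (hg : g ∈ I), 0 ≤ φ ⟨g, hIs g hg⟩ := fun g hg => hφ _
        ⟨g, hg, 0, zero_mem_SigmaH n, fun _ => 0, fun _ => zero_mem_SigmaH n, by simp⟩
      have := hpos a ?_ ?_
      · rw [show evalAt a f = _ from hfa] at this
        simpa using this
      · intro g hg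
        have hng : -g ∈ I := by
          have := hImul (-1) (by simp) g hg
          simpa using this
        have h1 := hIM g hg
        have h2 := hIM (-g) hng
        have h3 : (⟨-g, hIs _ hng⟩ : realForm n) = -⟨g, hIs g hg⟩ := rfl
        rw [h3, map_neg] at h2
        have h4 : φ ⟨g, hIs g hg⟩ = 0 := by linarith
        have := ha ⟨g, hIs g hg⟩
        rw [h4] at this
        simpa using this
      · intro i
        have h1 : 0 ≤ φ ⟨p i, hp i⟩ := hφ _
          ⟨0, hI0, 0, zero_mem_SigmaH n, Pi.single i 1, fun j => by
            by_cases h : j = i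
            · subst h; simpa using hone
            · simpa [h] using zero_mem_SigmaH n, by
            rw [Finset.sum_eq_single i] <;> simp +contextual⟩
        have := ha ⟨p i, hp i⟩
        rw [show evalAt a (p i) = _ from this]
        simpa using h1
  exact main

end
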